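/- Let H be a 2-vertex-connected undirected graph with a DFS tree T rooted at r, let c be a vertex different from r, and let u be a vertex with u ≠ r. (i) If {p(c),(u,p(u))} is a vertex-edge cut-pair of H such that u is an ancestor of p(c) and M(u) is a descendant of c, then M_p(c) = M(u) and high_p(c) is a proper ancestor of u. (ii) Conversely, if u is a proper ancestor of p(c), M_p(c) = M(u), and high_p(c) is a proper ancestor of u, then {p(c),(u,p(u))} is a vertex-edge cut-pair of H. -/

import Mathlib

/-- A DFS tree of the graph `H`, rooted at `r`, given by a parent function:
it is a spanning tree (every vertex reaches the root by iterating the parent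
function, and each non-root vertex is adjacent to its parent), and every edge
of `H` joins a vertex to one of its ancestors. -/
structure DFSTree {V : Type*} (H : SimpleGraph V) (r : V) where
  par : V → V
  par_root : par r = r
  reaches_root : ∀ v : V, ∃ n : ℕ, par^[n] v = r
  par_adj : ∀ v : V, v ≠ r → H.Adj v (par v)
  edge_anc : ∀ x y : V, H.Adj x y → (∃ n : ℕ, par^[n] x = y) ∨ (∃ n : ℕ, par^[n] y = x)

namespace DFSTree

variable {V : Type*} {H : SimpleGraph V} {r : V} (T : DFSTree H r)

/-- `a` is an ancestor of `b` (every vertex is an ancestor of itself). -/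
def Anc (a b : V) : Prop := ∃ n : ℕ, T.par^[n] b = a

/-- `a` is a proper ancestor of `b`. -/
def PAnc (a b : V) : Prop := T.Anc a b ∧ a ≠ b

/-- `(x,y)` is a back-edge: an edge of `H` from `x` to an ancestor `y` of `x`
which is not the tree edge from `x` to its parent. -/
def BackEdge (x y : V) : Prop := H.Adj x y ∧ T.Anc y x ∧ T.par x ≠ y

/-- The set of descendants of `v` joined by a back-edge to a proper ancestor of `v`. -/
def MSet (v : V) : Set V := {x | T.Anc v x ∧ ∃ y, T.PAnc y v ∧ T.BackEdge x y}

/-- `m = M(v)`: `m` is the nearest common ancestor of all descendants of `v`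
joined by a back-edge to a proper ancestor of `v`. -/
def IsM (v m : V) : Prop :=
  (∀ x ∈ T.MSet v, T.Anc m x) ∧ ∀ m' : V, (∀ x ∈ T.MSet v, T.Anc m' x) → T.Anc m' m

/-- The set of descendants of `v` joined by a back-edge to a proper ancestor of `p(v)`. -/
def MpSet (v : V) : Set V := {x | T.Anc v x ∧ ∃ y, T.PAnc y (T.par v) ∧ T.BackEdge x y}

/-- `m = M_p(v)`: `m` is the nearest common ancestor of all descendants of `v`
joined by a back-edge to a proper ancestor of `p(v)`. -/
def IsMp (v m : V) : Prop :=
  (∀ x ∈ T.MpSet v, T.Anc m x) ∧ ∀ m' : V, (∀ x ∈ T.MpSet v, T.Anc m' x) → T.Anc m' m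

/-- `h = high(v)`: `h` is the deepest proper ancestor of `v` joined by a
back-edge to a descendant of `v`. -/
def IsHigh (v h : V) : Prop :=
  T.PAnc h v ∧ (∃ x, T.Anc v x ∧ T.BackEdge x h) ∧
    ∀ h' : V, T.PAnc h' v → (∃ x, T.Anc v x ∧ T.BackEdge x h') → T.Anc h' h

/-- `h = high_p(v)`: `h` is the deepest proper ancestor of `p(v)` joined by a
back-edge to a descendant of `v`. -/
def IsHighP (v h : V) : Prop :=
  T.PAnc h (T.par v) ∧ (∃ x, T.Anc v x ∧ T.BackEdge x h) ∧
    ∀ h' : V, T.PAnc h' (T.par v) → (∃ x, T.Anc v x ∧ T.BackEdge x h') → T.Anc h' h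

/-- `l = low(v)`: `l` is the proper ancestor of `v` nearest to the root joined
by a back-edge to a descendant of `v`. -/
def IsLow (v l : V) : Prop :=
  T.PAnc l v ∧ (∃ x, T.Anc v x ∧ T.BackEdge x l) ∧
    ∀ l' : V, T.PAnc l' v → (∃ x, T.Anc v x ∧ T.BackEdge x l') → T.Anc l l'

end DFSTree

/-- `{v, e}` is a vertex-edge cut-pair of `H`: `e` is an edge of `H` and deleting
both `v` (with its incident edges) and `e` disconnects `H`. -/
def VECutPair {V : Type*} (H : SimpleGraph V) (v : V) (e : Sym2 V) : Prop :=
  e ∈ H.edgeSet ∧ ¬ ((H.deleteEdges {e}).induce {u | u ≠ v}).Connected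

/-- `{e, e'}` is a cut-pair of `H`: `e` and `e'` are distinct edges of `H` whose
deletion disconnects `H`. -/
def ECutPair {V : Type*} (H : SimpleGraph V) (e e' : Sym2 V) : Prop :=
  e ∈ H.edgeSet ∧ e' ∈ H.edgeSet ∧ e ≠ e' ∧ ¬ (H.deleteEdges {e, e'}).Connected

/-- An undirected graph is 2-edge-connected if it is connected and has no bridge. -/
def TwoEdgeConnected {W : Type*} (G : SimpleGraph W) : Prop :=
  G.Connected ∧ ∀ e ∈ G.edgeSet, ¬ G.IsBridge e

/-- An undirected graph is 2-vertex-connected if it has at least three vertices,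
is connected, and deleting any single vertex leaves it connected. -/
def TwoVertexConnected {W : Type*} (G : SimpleGraph W) : Prop :=
  3 ≤ Nat.card W ∧ G.Connected ∧ ∀ v : W, (G.induce {u | u ≠ v}).Connected

/-!
Write `w = p(c)`, let `D(v)` be the set of descendants of `v`, and let `u` be a proper ancestor of
`w` such that every back-edge from `D(u)` to a proper ancestor of `u` starts in `D(c)`. After
deleting `w` and the tree edge `(u, p(u))`, each of the sets `V \ D(u)`, `D(u) \ D(w)` and `D(c)`
is still connected by tree edges, and the first is joined to `D(c)` by a back-edge because `u` is
not a cut vertex. Hence a back-edge between `D(c)` and `D(u) \ D(w)` would reconnect `u` to `p(u)`,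
and if there is none then no edge leaves `D(u) \ (D(c) ∪ {w})`. So `{w, (u, p(u))}` is a cut-pair
exactly when every back-edge from `D(c)` to a proper ancestor of `w` ends above `u`, that is, when
`high_p(c)` is a proper ancestor of `u`; and then `M_p(c)` and `M(u)` are nearest common ancestors
of the same set.
-/

section Connectivity

variable {V : Type*} {G G' : SimpleGraph V}

theorem connected_of_forall_adj_reachable (hG : G.Connected)
    (h : ∀ a b, G.Adj a b → G'.Reachable a b) : G'.Connected where
  preconnected a b := by
    obtain ⟨p⟩ := hG.preconnected a b
    induction p with
    | nil => rfl
    | cons hadj _ ih => exact (h _ _ hadj).trans ih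
  nonempty := hG.nonempty

theorem connected_induce_deleteEdges {S : Set V} {a b : V} (hS : (G.induce S).Connected)
    (h : ∀ (ha : a ∈ S) (hb : b ∈ S),
      ((G.deleteEdges {s(a, b)}).induce S).Reachable ⟨a, ha⟩ ⟨b, hb⟩) :
    ((G.deleteEdges {s(a, b)}).induce S).Connected := by
  refine connected_of_forall_adj_reachable hS ?_
  rintro ⟨x, hx⟩ ⟨y, hy⟩ (hadj : G.Adj x y)
  by_cases hxy : s(x, y) = s(a, b)
  · obtain ⟨rfl, rfl⟩ | ⟨rfl, rfl⟩ := Sym2.eq_iff.mp hxy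
    · exact h hx hy
    · exact (h hy hx).symm
  · exact SimpleGraph.Adj.reachable (SimpleGraph.deleteEdges_adj.mpr ⟨hadj, hxy⟩)

theorem exists_adj_mem_notMem_of_preconnected_induce {S A : Set V} {a b : V}
    (hS : (G.induce S).Preconnected) (ha : a ∈ S) (hb : b ∈ S) (haA : a ∈ A) (hbA : b ∉ A) :
    ∃ x ∈ S, ∃ y ∈ S, G.Adj x y ∧ x ∈ A ∧ y ∉ A := by
  obtain ⟨p⟩ := hS ⟨a, ha⟩ ⟨b, hb⟩
  obtain ⟨d, -, hfst, hsnd⟩ := p.exists_boundary_dart (Subtype.val ⁻¹' A) haA hbA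
  exact ⟨d.fst, d.fst.2, d.snd, d.snd.2, d.adj, hfst, hsnd⟩

theorem VECutPair.left_ne {w a b : V} (hw : (G.induce {v | v ≠ w}).Connected)
    (hcut : VECutPair G w s(a, b)) : a ≠ w :=
  fun haw => hcut.2 (connected_induce_deleteEdges hw fun ha _ => absurd haw ha)

end Connectivity

namespace DFSTree

variable {V : Type*} {H : SimpleGraph V} {r : V} {T : DFSTree H r} {a b c u v x y : V}

section Ancestors

theorem Anc.refl (a : V) : T.Anc a a := ⟨0, rfl⟩

theorem anc_par (a : V) : T.Anc (T.par a) a := ⟨1, rfl⟩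

theorem anc_root (a : V) : T.Anc r a := T.reaches_root a

theorem Anc.trans (hab : T.Anc a b) (hbc : T.Anc b c) : T.Anc a c := by
  obtain ⟨n, rfl⟩ := hab
  obtain ⟨m, rfl⟩ := hbc
  exact ⟨n + m, Function.iterate_add_apply ..⟩

theorem Anc.anc_par_of_ne (hab : T.Anc a b) (hne : a ≠ b) : T.Anc a (T.par b) := by
  obtain ⟨_ | n, hn⟩ := hab
  · exact absurd hn.symm hne
  · exact ⟨n, hn⟩

theorem Anc.eq_root (ha : T.Anc a r) : a = r := by
  obtain ⟨n, rfl⟩ := ha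
  exact Function.iterate_fixed T.par_root n

theorem Anc.total (hax : T.Anc a x) (hbx : T.Anc b x) : T.Anc a b ∨ T.Anc b a := by
  obtain ⟨n, rfl⟩ := hax
  obtain ⟨m, rfl⟩ := hbx
  obtain ⟨d, rfl⟩ | ⟨d, rfl⟩ := (le_total n m).imp Nat.exists_eq_add_of_le' Nat.exists_eq_add_of_le'
  · exact .inr ⟨d, (Function.iterate_add_apply ..).symm⟩
  · exact .inl ⟨d, (Function.iterate_add_apply ..).symm⟩

/- If `a ≠ b`, then `b` lies on a cycle of the parent function, along which it would also reach
`r`; but `r` is a fixed point. -/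
theorem Anc.antisymm (hab : T.Anc a b) (hba : T.Anc b a) : a = b := by
  obtain ⟨n, hn⟩ := hab
  obtain ⟨m, hm⟩ := hba
  obtain rfl | hpos := Nat.eq_zero_or_pos n
  · exact hn.symm
  obtain ⟨k, hk⟩ := T.reaches_root b
  have hperiod : Function.IsPeriodicPt T.par (m + n) b := by
    rw [Function.IsPeriodicPt, Function.IsFixedPt, Function.iterate_add_apply, hn, hm]
  have hroot : T.Anc b r := by
    obtain ⟨d, hd⟩ := Nat.exists_eq_add_of_le' (Nat.le_mul_of_pos_left k (by lia : 0 < m + n))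
    have hloop : T.par^[(m + n) * k] b = b := hperiod.mul_const k
    exact ⟨d, by rwa [hd, Function.iterate_add_apply, hk] at hloop⟩
  obtain rfl := hroot.eq_root
  exact Anc.eq_root ⟨n, hn⟩

theorem PAnc.not_anc (hab : T.PAnc a b) : ¬ T.Anc b a :=
  fun hba => hab.2 (hab.1.antisymm hba)

theorem Anc.trans_pAnc (hab : T.Anc a b) (hbc : T.PAnc b c) : T.PAnc a c :=
  ⟨hab.trans hbc.1, fun hac => hbc.not_anc (hac ▸ hab)⟩

theorem PAnc.trans_anc (hab : T.PAnc a b) (hbc : T.Anc b c) : T.PAnc a c :=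
  ⟨hab.1.trans hbc, fun hac => hab.not_anc (hac ▸ hbc)⟩

theorem pAnc_par (hv : v ≠ r) : T.PAnc (T.par v) v :=
  ⟨anc_par v, (T.par_adj v hv).ne'⟩

theorem PAnc.ne_root (hab : T.PAnc a b) : b ≠ r := by
  rintro rfl
  exact hab.2 hab.1.eq_root

theorem ne_root_of_pAnc_par (huc : T.PAnc u (T.par c)) : c ≠ r :=
  (huc.trans_anc (anc_par c)).ne_root

theorem Anc.pAnc_of_not_anc (hax : T.Anc a x) (hbx : T.Anc b x) (hba : ¬ T.Anc b a) :
    T.PAnc a b :=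
  ⟨(hax.total hbx).resolve_right hba, fun hab => hba (hab ▸ Anc.refl a)⟩

end Ancestors

section Subtrees

variable (T) in
/-- The vertex set `D(v)` of the subtree hanging from `v`, that is, the descendants of `v`. -/
def subtree (v : V) : Set V := {x | T.Anc v x}

theorem anc_of_adj_of_mem_of_notMem_subtree (hadj : H.Adj x y) (hx : x ∈ T.subtree v)
    (hy : y ∉ T.subtree v) : T.Anc y x :=
  (T.edge_anc x y hadj).resolve_right fun hxy => hy (Anc.trans hx hxy)

theorem pAnc_of_adj_of_mem_of_notMem_subtree (hadj : H.Adj x y) (hx : x ∈ T.subtree v)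
    (hy : y ∉ T.subtree v) : T.PAnc y v :=
  (anc_of_adj_of_mem_of_notMem_subtree hadj hx hy).pAnc_of_not_anc hx hy

theorem backEdge_of_adj_of_mem_of_notMem_subtree (hadj : H.Adj x y) (hx : x ∈ T.subtree v)
    (hy : y ∉ T.subtree v) (hne : s(x, y) ≠ s(v, T.par v)) : T.BackEdge x y := by
  refine ⟨hadj, anc_of_adj_of_mem_of_notMem_subtree hadj hx hy, ?_⟩
  rintro rfl
  have hvx : v ≠ x := by
    rintro rfl
    exact hne rfl
  exact hy (Anc.anc_par_of_ne hx hvx)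

theorem mem_mSet_of_adj_of_mem_of_notMem_subtree (hadj : H.Adj x y) (hx : x ∈ T.subtree v)
    (hy : y ∉ T.subtree v) (hne : s(x, y) ≠ s(v, T.par v)) : x ∈ T.MSet v :=
  ⟨hx, y, pAnc_of_adj_of_mem_of_notMem_subtree hadj hx hy,
    backEdge_of_adj_of_mem_of_notMem_subtree hadj hx hy hne⟩

theorem mSet_nonempty (hv : v ≠ r) (hvx : T.PAnc v x) (hconn : (H.induce {y | y ≠ v}).Connected) :
    (T.MSet v).Nonempty := by
  obtain ⟨a, hav, b, -, hadj, ha, hb⟩ := exists_adj_mem_notMem_of_preconnected_induce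
    (A := T.subtree v) hconn.preconnected hvx.2.symm (pAnc_par hv).2 hvx.1 (pAnc_par hv).not_anc
  refine ⟨a, mem_mSet_of_adj_of_mem_of_notMem_subtree hadj ha hb fun he => ?_⟩
  obtain ⟨hav', -⟩ | ⟨-, hbv⟩ := Sym2.eq_iff.mp he
  · exact hav hav'
  · exact hb (hbv ▸ Anc.refl b)

end Subtrees

section DeletedTreeEdge

theorem adj_deleteEdges_of_not_anc (hadj : H.Adj x y) (hxu : ¬ T.Anc x u) :
    (H.deleteEdges {s(u, T.par u)}).Adj x y := by
  refine SimpleGraph.deleteEdges_adj.mpr ⟨hadj, fun he => hxu ?_⟩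
  obtain ⟨rfl, -⟩ | ⟨rfl, -⟩ := Sym2.eq_iff.mp he
  exacts [Anc.refl x, anc_par u]

theorem adj_par_deleteEdges (hx : x ≠ r) (hxu : x ≠ u) :
    (H.deleteEdges {s(u, T.par u)}).Adj x (T.par x) := by
  refine SimpleGraph.deleteEdges_adj.mpr ⟨T.par_adj x hx, fun he => hxu ?_⟩
  obtain ⟨rfl, -⟩ | ⟨hxu, hux⟩ := Sym2.eq_iff.mp he
  · rfl
  · exact Anc.antisymm (hxu ▸ anc_par u) (hux ▸ anc_par x)

theorem connected_induce_of_par_mem {S : Set V} (ha : a ∈ S) (hanc : S ⊆ T.subtree a)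
    (hpar : ∀ x ∈ S, x ≠ a → T.par x ∈ S) (hu : u ∈ S → u = a) :
    ((H.deleteEdges {s(u, T.par u)}).induce S).Connected := by
  refine (SimpleGraph.connected_iff_exists_forall_reachable _).mpr ⟨⟨a, ha⟩, ?_⟩
  rintro ⟨x, hx⟩
  obtain ⟨n, hn⟩ := hanc hx
  induction n generalizing x with
  | zero =>
    obtain rfl : x = a := hn
    rfl
  | succ n ih =>
    by_cases hxa : x = a
    · subst hxa
      rfl
    have hadj : (H.deleteEdges {s(u, T.par u)}).Adj x (T.par x) :=
      adj_par_deleteEdges (PAnc.ne_root ⟨hanc hx, Ne.symm hxa⟩)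
        (by rintro rfl; exact hxa (hu hx))
    exact (ih (T.par x) (hpar x hx hxa) hn).trans (SimpleGraph.Adj.reachable hadj.symm)

theorem connected_induce_subtree (hu : ¬ T.Anc a u) :
    ((H.deleteEdges {s(u, T.par u)}).induce (T.subtree a)).Connected :=
  connected_induce_of_par_mem (Anc.refl a) subset_rfl
    (fun _ hx hxa => Anc.anc_par_of_ne hx hxa.symm) (fun hau => absurd hau hu)

theorem connected_induce_subtree_diff (hba : ¬ T.Anc b a)
    (hu : u ∈ T.subtree a \ T.subtree b → u = a) :
    ((H.deleteEdges {s(u, T.par u)}).induce (T.subtree a \ T.subtree b)).Connected :=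
  connected_induce_of_par_mem ⟨Anc.refl a, hba⟩ Set.sdiff_subset
    (fun x hx hxa => ⟨Anc.anc_par_of_ne hx.1 hxa.symm, fun hbx => hx.2 (hbx.trans (anc_par x))⟩) hu

end DeletedTreeEdge

section CutPairs

theorem reachable_par_of_adj_subtree {z t : V} (hu : u ≠ r) (huc : T.PAnc u (T.par c))
    (hx : x ∈ T.subtree c) (hxy : H.Adj x y) (huy : T.Anc u y) (hyc : T.PAnc y (T.par c))
    (hz : z ∈ T.subtree c) (hzt : H.Adj z t) (htu : T.PAnc t u)
    (huw : u ≠ T.par c) (hpw : T.par u ≠ T.par c) :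
    ((H.deleteEdges {s(u, T.par u)}).induce {v | v ≠ T.par c}).Reachable
      ⟨u, huw⟩ ⟨T.par u, hpw⟩ := by
  have hpc := pAnc_par (T := T) (ne_root_of_pAnc_par huc)
  have hnot_anc : ∀ v ∈ T.subtree c, ¬ T.Anc v u :=
    fun v hv hvu => (huc.trans_anc hpc.1).not_anc (Anc.trans hv hvu)
  have hmiddle := connected_induce_subtree_diff huc.not_anc (fun _ => rfl)
  have hbelow := connected_induce_subtree (hnot_anc c (Anc.refl c))
  have habove := connected_induce_subtree_diff (T := T) (u := u) (fun hur => hu (Anc.eq_root hur))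
    (fun h => absurd (Anc.refl u) h.2)
  have hmiddle_below := SimpleGraph.connected_induce_union hmiddle.preconnected
    hbelow.preconnected ⟨huy, hyc.not_anc⟩ hx (adj_deleteEdges_of_not_anc hxy (hnot_anc x hx)).symm
  have hall := SimpleGraph.connected_induce_union hmiddle_below.preconnected
    habove.preconnected (.inr hz) ⟨anc_root t, htu.not_anc⟩
    (adj_deleteEdges_of_not_anc hzt (hnot_anc z hz))
  have havoid : T.subtree u \ T.subtree (T.par c) ∪ T.subtree c ∪ T.subtree r \ T.subtree u ⊆
      {v | v ≠ T.par c} := by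
    rintro v ((hv | hv) | hv) rfl
    exacts [hv.2 (Anc.refl _), hpc.not_anc hv, hv.2 huc.1]
  exact (hall.preconnected ⟨u, .inl (.inl ⟨Anc.refl u, huc.not_anc⟩)⟩
    ⟨T.par u, .inr ⟨anc_root _, (pAnc_par hu).not_anc⟩⟩).map
      (SimpleGraph.induceHomOfLE _ havoid).toHom

theorem pAnc_of_backEdge_of_veCutPair (hu : u ≠ r) (huc : T.PAnc u (T.par c))
    (hconn : ∀ v, (H.induce {x | x ≠ v}).Connected) (hM : T.MSet u ⊆ T.subtree c)
    (hcut : VECutPair H (T.par c) s(u, T.par u)) (hx : x ∈ T.subtree c)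
    (hyc : T.PAnc y (T.par c)) (hxy : T.BackEdge x y) : T.PAnc y u := by
  obtain ⟨z, hz⟩ := mSet_nonempty hu huc (hconn u)
  obtain ⟨t, htu, hzt⟩ := hz.2
  by_contra hyu
  have huy : T.Anc u y := by
    by_contra hnot
    exact hyu (hyc.1.pAnc_of_not_anc huc.1 hnot)
  exact hcut.2 (connected_induce_deleteEdges (hconn (T.par c))
    (reachable_par_of_adj_subtree hu huc hx hxy.1 huy hyc (hM hz) hzt.1 htu))

theorem veCutPair_of_forall_backEdge (hu : u ≠ r) (huc : T.PAnc u (T.par c))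
    (hM : T.MSet u ⊆ T.subtree c)
    (hback : ∀ x ∈ T.subtree c, ∀ y, T.PAnc y (T.par c) → T.BackEdge x y → T.PAnc y u) :
    VECutPair H (T.par c) s(u, T.par u) := by
  refine ⟨T.par_adj u hu, fun hconn => ?_⟩
  have hcu : ¬ T.Anc c u := (huc.trans_anc (anc_par c)).not_anc
  obtain ⟨a, hac, b, -, hab, ⟨hua, hca⟩, hb⟩ := exists_adj_mem_notMem_of_preconnected_induce
    (A := T.subtree u \ T.subtree c) hconn.preconnected huc.2 ((anc_par u).trans_pAnc huc).2
    ⟨Anc.refl u, hcu⟩ (fun h => (pAnc_par hu).not_anc h.1)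
  obtain ⟨hadj, hne⟩ := SimpleGraph.deleteEdges_adj.mp hab
  by_cases hcb : b ∈ T.subtree c
  · have hpac : T.PAnc a c := pAnc_of_adj_of_mem_of_notMem_subtree hadj.symm hcb hca
    have hback_edge : T.BackEdge b a :=
      backEdge_of_adj_of_mem_of_notMem_subtree hadj.symm hcb hca fun he =>
        (Sym2.eq_iff.mp he).elim (fun h => hac h.2) (fun h => hpac.2 h.2)
    exact (hback b hcb a ⟨hpac.1.anc_par_of_ne hpac.2, hac⟩ hback_edge).not_anc hua
  · exact hca (hM (mem_mSet_of_adj_of_mem_of_notMem_subtree hadj hua (fun h => hb ⟨h, hcb⟩) hne))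

end CutPairs

section ExtremalPoints

variable {m m' h : V}

theorem IsM.mSet_subset_subtree (hm : T.IsM u m) (hcm : T.Anc c m) : T.MSet u ⊆ T.subtree c :=
  fun x hx => hcm.trans (hm.1 x hx)

theorem IsMp.anc (hm : T.IsMp c m) : T.Anc c m :=
  hm.2 c fun _ hx => hx.1

theorem IsMp.eq_of_mpSet_eq_mSet (hm : T.IsMp c m) (hm' : T.IsM u m')
    (hset : T.MpSet c = T.MSet u) : m = m' :=
  Anc.antisymm (hm'.2 m (hset ▸ hm.1)) (hm.2 m' (hset ▸ hm'.1))

theorem IsHighP.pAnc_iff_forall_backEdge (hh : T.IsHighP c h) : T.PAnc h u ↔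
    ∀ x ∈ T.subtree c, ∀ y, T.PAnc y (T.par c) → T.BackEdge x y → T.PAnc y u := by
  obtain ⟨hhc, ⟨x, hx, hxh⟩, hmax⟩ := hh
  exact ⟨fun hhu z hz y hyc hzy => (hmax y hyc ⟨z, hz, hzy⟩).trans_pAnc hhu,
    fun hback => hback x hx h hhc hxh⟩

theorem mpSet_eq_mSet (huc : T.PAnc u (T.par c)) (hM : T.MSet u ⊆ T.subtree c)
    (hback : ∀ x ∈ T.subtree c, ∀ y, T.PAnc y (T.par c) → T.BackEdge x y → T.PAnc y u) :
    T.MpSet c = T.MSet u := by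
  ext x
  constructor
  · rintro ⟨hcx, y, hyc, hxy⟩
    exact ⟨(huc.1.trans (anc_par c)).trans hcx, y, hback x hcx y hyc hxy, hxy⟩
  · intro hx
    obtain ⟨-, y, hyu, hxy⟩ := id hx
    exact ⟨hM hx, y, hyu.trans_anc huc.1, hxy⟩

end ExtremalPoints

end DFSTree

theorem stmt_12_general {V : Type*} (H : SimpleGraph V) (r : V) (T : DFSTree H r)
    (hH : ∀ v, (H.induce {x | x ≠ v}).Connected) (c u mu mpc hpc : V) (hu : u ≠ r)
    (hmu : T.IsM u mu) (hmpc : T.IsMp c mpc) (hhpc : T.IsHighP c hpc) :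
    (VECutPair H (T.par c) s(u, T.par u) → T.Anc u (T.par c) → T.Anc c mu →
      mpc = mu ∧ T.PAnc hpc u) ∧
    (T.PAnc u (T.par c) → mpc = mu → T.PAnc hpc u →
      VECutPair H (T.par c) s(u, T.par u)) := by
  constructor
  · intro hcut hanc hcmu
    have huc : T.PAnc u (T.par c) := ⟨hanc, hcut.left_ne (hH (T.par c))⟩
    have hM : T.MSet u ⊆ T.subtree c := hmu.mSet_subset_subtree hcmu
    have hback : ∀ x ∈ T.subtree c, ∀ y, T.PAnc y (T.par c) → T.BackEdge x y → T.PAnc y u :=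
      fun x hx y => DFSTree.pAnc_of_backEdge_of_veCutPair hu huc hH hM hcut hx
    exact ⟨hmpc.eq_of_mpSet_eq_mSet hmu (DFSTree.mpSet_eq_mSet huc hM hback),
      hhpc.pAnc_iff_forall_backEdge.mpr hback⟩
  · rintro huc rfl hhu
    exact DFSTree.veCutPair_of_forall_backEdge hu huc (hmu.mSet_subset_subtree hmpc.anc)
      (hhpc.pAnc_iff_forall_backEdge.mp hhu)

theorem stmt_12 {V : Type*} [Fintype V] (H : SimpleGraph V) (r : V)
    (T : DFSTree H r) (hH : TwoVertexConnected H) (c u mu mpc hpc : V)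
    (hc : c ≠ r) (hu : u ≠ r)
    (hmu : T.IsM u mu) (hmpc : T.IsMp c mpc) (hhpc : T.IsHighP c hpc) :
    (VECutPair H (T.par c) s(u, T.par u) → T.Anc u (T.par c) → T.Anc c mu →
      mpc = mu ∧ T.PAnc hpc u) ∧
    (T.PAnc u (T.par c) → mpc = mu → T.PAnc hpc u →
      VECutPair H (T.par c) s(u, T.par u)) :=
  stmt_12_general H r T hH.2.2 c u mu mpc hpc hu hmu hmpc hhpc
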